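/- For every prime p, the convolution identity Φ_p(1,0,0) * Φ_p(−1,0,0) = (p² + p + 1)·Φ_p(0,0,0) + Φ_p(1,0,−1) holds, where Φ_p(0,0,0) is the characteristic function of K_p. -/

import Mathlib

open MeasureTheory

noncomputable section

variable (p : ℕ) [Fact p.Prime]

/-- The diagonal element `diag(p^a, p^b, p^c)` of `GL₃(ℚ_p)`. -/
def padicDiag (a b c : ℤ) : GL (Fin 3) ℚ_[p] := by
  have hp : (p : ℚ_[p]) ≠ 0 := by
    exact_mod_cast (Nat.cast_ne_zero (R := ℚ_[p])).mpr (Fact.out : p.Prime).ne_zero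
  refine ⟨Matrix.diagonal ![(p : ℚ_[p]) ^ a, (p : ℚ_[p]) ^ b, (p : ℚ_[p]) ^ c],
    Matrix.diagonal ![(p : ℚ_[p]) ^ (-a), (p : ℚ_[p]) ^ (-b), (p : ℚ_[p]) ^ (-c)], ?_, ?_⟩ <;>
  · rw [Matrix.diagonal_mul_diagonal]
    ext i j
    fin_cases i <;> fin_cases j <;>
      simp [zpow_neg, mul_inv_cancel₀ (zpow_ne_zero _ hp), inv_mul_cancel₀ (zpow_ne_zero _ hp)]

/-- `K_p = GL₃(ℤ_p)`, viewed as the image of `GL₃(ℤ_p)` inside `GL₃(ℚ_p)`. -/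
def padicK : Set (GL (Fin 3) ℚ_[p]) :=
  Set.range fun u : (Matrix (Fin 3) (Fin 3) ℤ_[p])ˣ =>
    Units.map (RingHom.toMonoidHom (RingHom.mapMatrix (PadicInt.Coe.ringHom (p := p)))) u

/-- The double coset `K_p · diag(p^a, p^b, p^c) · K_p`. -/
def padicDoubleCoset (a b c : ℤ) : Set (GL (Fin 3) ℚ_[p]) :=
  {x | ∃ k₁ ∈ padicK p, ∃ k₂ ∈ padicK p, x = k₁ * padicDiag p a b c * k₂}

/-- `Φ_p(a,b,c)`: the characteristic function of `K_p(a,b,c)`. -/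
def padicPhi (a b c : ℤ) : GL (Fin 3) ℚ_[p] → ℝ :=
  (padicDoubleCoset p a b c).indicator fun _ => (1 : ℝ)

instance : MeasurableSpace (GL (Fin 3) ℚ_[p]) := borel _

/-- Convolution of functions on `GL₃(ℚ_p)` with respect to a measure `μ`. -/
def padicConv (μ : Measure (GL (Fin 3) ℚ_[p])) (f h : GL (Fin 3) ℚ_[p] → ℝ) :
    GL (Fin 3) ℚ_[p] → ℝ :=
  fun x => ∫ y, f y * h (y⁻¹ * x) ∂μ

set_option linter.unusedSimpArgs false
set_option linter.unnecessarySeqFocus false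

/-- The subgroup underlying `padicK`. -/
def KK : Subgroup (GL (Fin 3) ℚ_[p]) :=
  (Units.map (RingHom.toMonoidHom
    (RingHom.mapMatrix (m := Fin 3) (PadicInt.Coe.ringHom (p := p))))).range

lemma mem_KK_iff (x : GL (Fin 3) ℚ_[p]) : x ∈ padicK p ↔ x ∈ KK p := Iff.rfl

/-- Integral matrices. -/
def IntM (x : Matrix (Fin 3) (Fin 3) ℚ_[p]) : Prop := ∀ i j, x i j ∈ PadicInt.subring p

variable {p}

lemma memO {x : ℚ_[p]} : x ∈ PadicInt.subring p ↔ ‖x‖ ≤ 1 := Iff.rfl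

lemma p_ne : (p : ℚ_[p]) ≠ 0 := by
  exact_mod_cast (Nat.cast_ne_zero (R := ℚ_[p])).mpr (Fact.out : p.Prime).ne_zero

lemma IntM.mul {x y : Matrix (Fin 3) (Fin 3) ℚ_[p]} (hx : IntM p x) (hy : IntM p y) :
    IntM p (x * y) := by
  intro i j
  rw [Matrix.mul_apply]
  exact Subring.sum_mem _ fun k _ => Subring.mul_mem _ (hx i k) (hy k j)

lemma IntM.lift {x : Matrix (Fin 3) (Fin 3) ℚ_[p]} (hx : IntM p x) :
    ∃ Y : Matrix (Fin 3) (Fin 3) ℤ_[p], Y.map (PadicInt.Coe.ringHom (p := p)) = x :=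
  ⟨fun i j => ⟨x i j, hx i j⟩, by ext i j; rfl⟩

lemma mem_KK {x : GL (Fin 3) ℚ_[p]} : x ∈ KK p ↔ IntM p x.1 ∧ ‖x.1.det‖ = 1 := by
  constructor
  · rintro ⟨u, rfl⟩
    refine ⟨fun i j => (u.1 i j).2, ?_⟩
    have h : ((Units.map (RingHom.toMonoidHom
      (RingHom.mapMatrix (m := Fin 3) (PadicInt.Coe.ringHom (p := p))))) u).1.det
        = PadicInt.Coe.ringHom (p := p) u.1.det := by
      rw [RingHom.map_det]; rfl
    rw [h]
    have : IsUnit u.1.det := (Matrix.isUnit_iff_isUnit_det _).1 u.isUnit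
    exact PadicInt.isUnit_iff.1 this
  · rintro ⟨h1, h2⟩
    obtain ⟨Y, hY⟩ := h1.lift
    have hd : x.1.det = PadicInt.Coe.ringHom (p := p) Y.det := by
      rw [RingHom.map_det, ← hY]; rfl
    have hu : IsUnit Y := by
      rw [Matrix.isUnit_iff_isUnit_det, PadicInt.isUnit_iff]
      rw [hd] at h2
      exact h2
    refine ⟨hu.unit, ?_⟩
    apply Units.ext
    exact hY

/-- units with norm of det -/
lemma det_mul_norm (x y : GL (Fin 3) ℚ_[p]) : ‖(x * y).1.det‖ = ‖x.1.det‖ * ‖y.1.det‖ := by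
  rw [Units.val_mul, Matrix.det_mul, norm_mul]

lemma det_inv_norm (x : GL (Fin 3) ℚ_[p]) : ‖(x⁻¹).1.det‖ = ‖x.1.det‖⁻¹ := by
  have h := det_mul_norm x⁻¹ x
  rw [inv_mul_cancel, Units.val_one, Matrix.det_one, norm_one] at h
  exact eq_inv_of_mul_eq_one_left h.symm

lemma coe_diag (a b c : ℤ) : (padicDiag p a b c).1 =
    Matrix.diagonal ![(p : ℚ_[p]) ^ a, (p : ℚ_[p]) ^ b, (p : ℚ_[p]) ^ c] := rfl

lemma coe_diag' (a b c : ℤ) : (padicDiag p a b c).1 =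
    !![(p : ℚ_[p]) ^ a, 0, 0; 0, (p : ℚ_[p]) ^ b, 0; 0, 0, (p : ℚ_[p]) ^ c] := by
  rw [coe_diag]
  ext i j
  fin_cases i <;> fin_cases j <;> rfl

lemma inv_diag (a b c : ℤ) : (padicDiag p a b c)⁻¹ = padicDiag p (-a) (-b) (-c) := by
  apply Units.ext; rfl

lemma det_diag_norm (a b c : ℤ) : ‖(padicDiag p a b c).1.det‖ = (p : ℝ)⁻¹ ^ (a + b + c) := by
  have hp : ((p : ℝ)⁻¹) ≠ 0 := inv_ne_zero (by exact_mod_cast (Fact.out : p.Prime).ne_zero)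
  rw [coe_diag, Matrix.det_diagonal, Fin.prod_univ_three]
  simp only [norm_mul, norm_zpow, Padic.norm_p, Matrix.cons_val_zero, Matrix.cons_val_one,
    Matrix.cons_val]
  rw [zpow_add₀ hp, zpow_add₀ hp]

lemma pO : (p : ℚ_[p]) ∈ PadicInt.subring p := natCast_mem _ _

lemma divO {x : ℤ_[p]} (h : PadicInt.toZMod x = 0) : (x : ℚ_[p]) / p ∈ PadicInt.subring p := by
  have h' : x ∈ RingHom.ker (PadicInt.toZMod (p := p)) := h
  rw [PadicInt.ker_toZMod, PadicInt.maximalIdeal_eq_span_p, Ideal.mem_span_singleton] at h'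
  obtain ⟨c, rfl⟩ := h'
  have : ((p * c : ℤ_[p]) : ℚ_[p]) / p = c := by
    push_cast
    field_simp [p_ne (p := p)]
  rw [this]; exact c.2

lemma of_divO {x : ℤ_[p]} (h : (x : ℚ_[p]) / p ∈ PadicInt.subring p) : PadicInt.toZMod x = 0 := by
  have : x = (p : ℤ_[p]) * (show ℤ_[p] from ⟨_, h⟩) := by
    apply Subtype.ext
    change (x : ℚ_[p]) = ((p : ℤ_[p]) : ℚ_[p]) * ((x : ℚ_[p]) / p)
    push_cast
    field_simp [p_ne (p := p)]
  rw [this, map_mul]; simp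

lemma unit_or (x : ℤ_[p]) : (x : ℚ_[p]) / p ∈ PadicInt.subring p ∨ (x : ℚ_[p])⁻¹ ∈ PadicInt.subring p
    ∧ (x : ℚ_[p]) ≠ 0 := by
  by_cases h : PadicInt.toZMod x = 0
  · exact Or.inl (divO h)
  · right
    have h' : x ∉ RingHom.ker (PadicInt.toZMod (p := p)) := h
    rw [PadicInt.ker_toZMod, IsLocalRing.mem_maximalIdeal, mem_nonunits_iff, not_not,
      PadicInt.isUnit_iff] at h'
    constructor
    · rw [PadicInt.norm_def] at h'
      rw [memO, norm_inv, h', inv_one]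
    · intro h0; rw [PadicInt.norm_def, h0] at h'; simp at h'

/-- The double coset of `diag(p,1,1)`, as integral matrices of determinant norm `1/p`. -/
lemma S_int {y : GL (Fin 3) ℚ_[p]} (h : y ∈ padicDoubleCoset p 1 0 0) :
    IntM p y.1 ∧ ‖y.1.det‖ = (p : ℝ)⁻¹ := by
  obtain ⟨k, hk, l, hl, rfl⟩ := h
  rw [mem_KK_iff, mem_KK] at hk hl
  constructor
  · rw [Units.val_mul, Units.val_mul]
    refine (hk.1.mul ?_).mul hl.1
    intro i j
    rw [coe_diag]
    fin_cases i <;> fin_cases j <;> simp [pO, Subring.one_mem, Subring.zero_mem]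
  · rw [det_mul_norm, det_mul_norm, det_diag_norm, hk.2, hl.2]; simp

lemma S_left {a b c : ℤ} {k y : GL (Fin 3) ℚ_[p]} (hk : k ∈ KK p) (h : y ∈ padicDoubleCoset p a b c) :
    k * y ∈ padicDoubleCoset p a b c := by
  obtain ⟨k', hk', l, hl, rfl⟩ := h
  exact ⟨k * k', (KK p).mul_mem hk hk', l, hl, by group⟩

lemma S_right {a b c : ℤ} {k y : GL (Fin 3) ℚ_[p]} (hk : k ∈ KK p) (h : y ∈ padicDoubleCoset p a b c) :
    y * k ∈ padicDoubleCoset p a b c := by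
  obtain ⟨k', hk', l, hl, rfl⟩ := h
  exact ⟨k', hk', l * k, (KK p).mul_mem hl hk, by group⟩

lemma diag_mem (a b c : ℤ) : padicDiag p a b c ∈ padicDoubleCoset p a b c :=
  ⟨1, (KK p).one_mem, 1, (KK p).one_mem, by simp⟩

lemma S_inv {a b c : ℤ} {y : GL (Fin 3) ℚ_[p]} :
    y⁻¹ ∈ padicDoubleCoset p (-a) (-b) (-c) ↔ y ∈ padicDoubleCoset p a b c := by
  constructor
  · rintro ⟨k, hk, l, hl, h⟩
    refine ⟨l⁻¹, (KK p).inv_mem hl, k⁻¹, (KK p).inv_mem hk, ?_⟩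
    rw [← inv_inv y, h, mul_inv_rev, mul_inv_rev, inv_diag]; simp [mul_assoc]
  · rintro ⟨k, hk, l, hl, rfl⟩
    refine ⟨l⁻¹, (KK p).inv_mem hl, k⁻¹, (KK p).inv_mem hk, ?_⟩
    rw [mul_inv_rev, mul_inv_rev, inv_diag]; simp [mul_assoc]

lemma S_zero (x : GL (Fin 3) ℚ_[p]) : x ∈ padicDoubleCoset p 0 0 0 ↔ x ∈ KK p := by
  have h1 : padicDiag p 0 0 0 = 1 := by
    apply Units.ext
    rw [coe_diag]
    ext i j
    fin_cases i <;> fin_cases j <;> simp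
  constructor
  · rintro ⟨k, hk, l, hl, rfl⟩
    rw [h1, mul_one]; exact (KK p).mul_mem hk hl
  · intro h
    exact ⟨x, h, 1, (KK p).one_mem, by simp [h1]⟩

/-- Upper unipotent matrix. -/
def uni (a b c : ℚ_[p]) : GL (Fin 3) ℚ_[p] :=
  ⟨!![1, a, b; 0, 1, c; 0, 0, 1], !![1, -a, a * c - b; 0, 1, -c; 0, 0, 1],
    by ext i j; fin_cases i <;> fin_cases j <;> simp [Matrix.mul_apply, Fin.sum_univ_three] <;> ring,
    by ext i j; fin_cases i <;> fin_cases j <;> simp [Matrix.mul_apply, Fin.sum_univ_three] <;> ring⟩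

lemma uni_mem {a b c : ℚ_[p]} (ha : a ∈ PadicInt.subring p) (hb : b ∈ PadicInt.subring p)
    (hc : c ∈ PadicInt.subring p) : uni a b c ∈ KK p := by
  rw [mem_KK]
  constructor
  · intro i j
    fin_cases i <;> fin_cases j <;> simp [uni, ha, hb, hc, Subring.one_mem, Subring.zero_mem]
  · simp [uni, Matrix.det_fin_three]

/-- Permutation swapping coordinates 0 and 1. -/
def sw01 : GL (Fin 3) ℚ_[p] :=
  ⟨!![0, 1, 0; 1, 0, 0; 0, 0, 1], !![0, 1, 0; 1, 0, 0; 0, 0, 1],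
    by ext i j; fin_cases i <;> fin_cases j <;> simp [Matrix.mul_apply, Fin.sum_univ_three],
    by ext i j; fin_cases i <;> fin_cases j <;> simp [Matrix.mul_apply, Fin.sum_univ_three]⟩
/-- Permutation swapping coordinates 0 and 2. -/
def sw02 : GL (Fin 3) ℚ_[p] :=
  ⟨!![0, 0, 1; 0, 1, 0; 1, 0, 0], !![0, 0, 1; 0, 1, 0; 1, 0, 0],
    by ext i j; fin_cases i <;> fin_cases j <;> simp [Matrix.mul_apply, Fin.sum_univ_three],
    by ext i j; fin_cases i <;> fin_cases j <;> simp [Matrix.mul_apply, Fin.sum_univ_three]⟩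
/-- Permutation swapping coordinates 1 and 2. -/
def sw12 : GL (Fin 3) ℚ_[p] :=
  ⟨!![1, 0, 0; 0, 0, 1; 0, 1, 0], !![1, 0, 0; 0, 0, 1; 0, 1, 0],
    by ext i j; fin_cases i <;> fin_cases j <;> simp [Matrix.mul_apply, Fin.sum_univ_three],
    by ext i j; fin_cases i <;> fin_cases j <;> simp [Matrix.mul_apply, Fin.sum_univ_three]⟩

lemma sw01_mem : sw01 ∈ KK p := by
  rw [mem_KK]
  constructor
  · intro i j
    fin_cases i <;> fin_cases j <;> simp [sw01, Subring.one_mem, Subring.zero_mem]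
  · simp [sw01, Matrix.det_fin_three]
lemma sw02_mem : sw02 ∈ KK p := by
  rw [mem_KK]
  constructor
  · intro i j
    fin_cases i <;> fin_cases j <;> simp [sw02, Subring.one_mem, Subring.zero_mem]
  · simp [sw02, Matrix.det_fin_three]
lemma sw12_mem : sw12 ∈ KK p := by
  rw [mem_KK]
  constructor
  · intro i j
    fin_cases i <;> fin_cases j <;> simp [sw12, Subring.one_mem, Subring.zero_mem]
  · simp [sw12, Matrix.det_fin_three]

lemma d010 : padicDiag p 0 1 0 = sw01 * padicDiag p 1 0 0 * sw01 := by
  apply Units.ext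
  ext i j
  fin_cases i <;> fin_cases j <;>
    simp [sw01, coe_diag', Matrix.mul_apply, Fin.sum_univ_three]

lemma d001 : padicDiag p 0 0 1 = sw02 * padicDiag p 1 0 0 * sw02 := by
  apply Units.ext
  ext i j
  fin_cases i <;> fin_cases j <;>
    simp [sw02, coe_diag', Matrix.mul_apply, Fin.sum_univ_three]

/-- Coset representatives. -/
def rA (s t : ℚ_[p]) : GL (Fin 3) ℚ_[p] := uni (-s) (-t) 0 * padicDiag p 1 0 0
/-- Coset representatives. -/
def rB (t : ℚ_[p]) : GL (Fin 3) ℚ_[p] := uni 0 0 (-t) * padicDiag p 0 1 0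
/-- Coset representatives. -/
def rC : GL (Fin 3) ℚ_[p] := padicDiag p 0 0 1

lemma rA_inv (s t : ℚ_[p]) (y : GL (Fin 3) ℚ_[p]) (j : Fin 3) :
    ((rA s t)⁻¹ * y).1 0 j = (y.1 0 j + s * y.1 1 j + t * y.1 2 j) / p ∧
    ((rA s t)⁻¹ * y).1 1 j = y.1 1 j ∧ ((rA s t)⁻¹ * y).1 2 j = y.1 2 j := by
  have h : ((rA s t)⁻¹).1 = !![(p : ℚ_[p])⁻¹, s / p, t / p; 0, 1, 0; 0, 0, 1] := by
    rw [rA, mul_inv_rev, inv_diag, Units.val_mul, coe_diag']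
    change _ * (!![1, _, _; 0, 1, _; 0, 0, 1] : Matrix (Fin 3) (Fin 3) ℚ_[p]) = _
    ext i j
    fin_cases i <;> fin_cases j <;>
      simp [Matrix.mul_apply, Fin.sum_univ_three] <;> ring
  rw [Units.val_mul, h]
  simp [Matrix.mul_apply, Fin.sum_univ_three]
  ring

lemma rB_inv (t : ℚ_[p]) (y : GL (Fin 3) ℚ_[p]) (j : Fin 3) :
    ((rB t)⁻¹ * y).1 1 j = (y.1 1 j + t * y.1 2 j) / p ∧
    ((rB t)⁻¹ * y).1 0 j = y.1 0 j ∧ ((rB t)⁻¹ * y).1 2 j = y.1 2 j := by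
  have h : ((rB t)⁻¹).1 = !![1, 0, 0; 0, (p : ℚ_[p])⁻¹, t / p; 0, 0, 1] := by
    rw [rB, mul_inv_rev, inv_diag, Units.val_mul, coe_diag']
    change _ * (!![1, _, _; 0, 1, _; 0, 0, 1] : Matrix (Fin 3) (Fin 3) ℚ_[p]) = _
    ext i j
    fin_cases i <;> fin_cases j <;>
      simp [Matrix.mul_apply, Fin.sum_univ_three] <;> ring
  rw [Units.val_mul, h]
  simp [Matrix.mul_apply, Fin.sum_univ_three]
  ring

lemma rC_inv (y : GL (Fin 3) ℚ_[p]) (j : Fin 3) :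
    (rC⁻¹ * y).1 2 j = y.1 2 j / p ∧
    (rC⁻¹ * y).1 0 j = y.1 0 j ∧ (rC⁻¹ * y).1 1 j = y.1 1 j := by
  rw [rC, inv_diag, Units.val_mul, coe_diag']
  simp [Matrix.mul_apply, Fin.sum_univ_three]
  ring

lemma rA_S {s t : ℚ_[p]} (hs : s ∈ PadicInt.subring p) (ht : t ∈ PadicInt.subring p) :
    rA s t ∈ padicDoubleCoset p 1 0 0 :=
  S_left (uni_mem (Subring.neg_mem _ hs) (Subring.neg_mem _ ht) (Subring.zero_mem _)) (diag_mem _ _ _)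

lemma rB_S {t : ℚ_[p]} (ht : t ∈ PadicInt.subring p) :
    rB t ∈ padicDoubleCoset p 1 0 0 := by
  refine S_left (uni_mem (Subring.zero_mem _) (Subring.zero_mem _) (Subring.neg_mem _ ht)) ?_
  rw [d010]
  exact S_right sw01_mem (S_left sw01_mem (diag_mem _ _ _))

lemma rC_S : rC ∈ padicDoubleCoset p 1 0 0 := by
  rw [rC, d001]
  exact S_right sw02_mem (S_left sw02_mem (diag_mem _ _ _))

variable (p) in
/-- Index set for the coset representatives. -/
abbrev Idx := (ZMod p × ZMod p) ⊕ (ZMod p ⊕ Unit)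

/-- Coset representatives. -/
def rep : Idx p → GL (Fin 3) ℚ_[p]
  | .inl (s, t) => rA (s.val : ℚ_[p]) (t.val : ℚ_[p])
  | .inr (.inl t) => rB (t.val : ℚ_[p])
  | .inr (.inr _) => rC

lemma rep_S (i : Idx p) : rep i ∈ padicDoubleCoset p 1 0 0 := by
  rcases i with ⟨s, t⟩ | t | _
  · exact rA_S (natCast_mem _ _) (natCast_mem _ _)
  · exact rB_S (natCast_mem _ _)
  · exact rC_S

lemma toZMod_val (s : ZMod p) : PadicInt.toZMod ((s.val : ℕ) : ℤ_[p]) = s := by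
  rw [map_natCast, ZMod.natCast_zmod_val]

lemma det_quot {y z : GL (Fin 3) ℚ_[p]} (hz : ‖z.1.det‖ = (p : ℝ)⁻¹) (hy : ‖y.1.det‖ = (p : ℝ)⁻¹) :
    ‖(z⁻¹ * y).1.det‖ = 1 := by
  have hp : (p : ℝ) ≠ 0 := by exact_mod_cast (Fact.out : p.Prime).ne_zero
  rw [det_mul_norm, det_inv_norm, hz, hy, inv_inv, mul_inv_cancel₀ hp]

lemma exists_rep {y : GL (Fin 3) ℚ_[p]} (h : IntM p y.1) (hd : ‖y.1.det‖ = (p : ℝ)⁻¹) :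
    ∃ i : Idx p, (rep i)⁻¹ * y ∈ KK p := by
  suffices hh : ∃ i : Idx p, IntM p ((rep i)⁻¹ * y).1 by
    obtain ⟨i, hi⟩ := hh
    exact ⟨i, mem_KK.2 ⟨hi, det_quot (S_int (rep_S i)).2 hd⟩⟩
  obtain ⟨Y, hY⟩ := h.lift
  have hYe : ∀ i j, y.1 i j = (Y i j : ℚ_[p]) := fun i j => by rw [← hY]; rfl
  have hd0 : (Y.map (PadicInt.toZMod (p := p))).det = 0 := by
    have h1 : (Y.map (PadicInt.toZMod (p := p))).det = PadicInt.toZMod Y.det := by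
      rw [RingHom.map_det]; rfl
    have h2 : y.1.det = (Y.det : ℚ_[p]) := by
      have : PadicInt.Coe.ringHom (p := p) Y.det = y.1.det := by
        rw [RingHom.map_det, ← hY]; rfl
      exact this.symm
    rw [h1]
    apply of_divO
    rw [← h2, memO, norm_div, hd, Padic.norm_p]
    exact div_self_le_one _
  obtain ⟨v, hv0, hv⟩ := Matrix.exists_vecMul_eq_zero_iff.2 hd0
  have hv' : ∀ j, v 0 * PadicInt.toZMod (Y 0 j) + v 1 * PadicInt.toZMod (Y 1 j)
      + v 2 * PadicInt.toZMod (Y 2 j) = 0 := by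
    intro j
    have := congrFun hv j
    simpa [Matrix.vecMul, dotProduct, Fin.sum_univ_three] using this
  by_cases h0 : v 0 = 0
  · by_cases h1 : v 1 = 0
    · have h2 : v 2 ≠ 0 := by
        intro h2; apply hv0; ext i; fin_cases i <;> simp [h0, h1, h2]
      refine ⟨.inr (.inr ()), fun i j => ?_⟩
      obtain ⟨e1, e2, e3⟩ := rC_inv y j
      fin_cases i
      · change (rC⁻¹ * y).1 0 j ∈ _
        rw [e2]; exact h _ _
      · change (rC⁻¹ * y).1 1 j ∈ _
        rw [e3]; exact h _ _
      · change (rC⁻¹ * y).1 2 j ∈ _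
        rw [e1, hYe]
        apply divO
        simpa [h0, h1, h2] using hv' j
    · refine ⟨.inr (.inl (v 2 / v 1)), fun i j => ?_⟩
      obtain ⟨e1, e2, e3⟩ := rB_inv ((v 2 / v 1).val : ℚ_[p]) y j
      fin_cases i
      · change ((rB ((v 2 / v 1).val : ℚ_[p]))⁻¹ * y).1 0 j ∈ _
        rw [e2]; exact h _ _
      · change ((rB ((v 2 / v 1).val : ℚ_[p]))⁻¹ * y).1 1 j ∈ _
        rw [e1, hYe, hYe]
        have := divO (x := Y 1 j + (((v 2 / v 1).val : ℕ) : ℤ_[p]) * Y 2 j) (by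
          rw [map_add, map_mul, toZMod_val]
          have := hv' j
          rw [h0] at this
          field_simp
          linear_combination this)
        simpa only [PadicInt.coe_add, PadicInt.coe_mul, PadicInt.coe_natCast] using this
      · change ((rB ((v 2 / v 1).val : ℚ_[p]))⁻¹ * y).1 2 j ∈ _
        rw [e3]; exact h _ _
  · refine ⟨.inl (v 1 / v 0, v 2 / v 0), fun i j => ?_⟩
    obtain ⟨e1, e2, e3⟩ := rA_inv ((v 1 / v 0).val : ℚ_[p]) ((v 2 / v 0).val : ℚ_[p]) y j
    fin_cases i
    · change ((rA ((v 1 / v 0).val : ℚ_[p]) ((v 2 / v 0).val : ℚ_[p]))⁻¹ * y).1 0 j ∈ _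
      rw [e1, hYe, hYe, hYe]
      have := divO (x := Y 0 j + (((v 1 / v 0).val : ℕ) : ℤ_[p]) * Y 1 j + (((v 2 / v 0).val : ℕ) : ℤ_[p]) * Y 2 j) (by
        rw [map_add, map_add, map_mul, map_mul, toZMod_val, toZMod_val]
        have := hv' j
        field_simp
        linear_combination this)
      simpa only [PadicInt.coe_add, PadicInt.coe_mul, PadicInt.coe_natCast] using this
    · change ((rA ((v 1 / v 0).val : ℚ_[p]) ((v 2 / v 0).val : ℚ_[p]))⁻¹ * y).1 1 j ∈ _
      rw [e2]; exact h _ _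
    · change ((rA ((v 1 / v 0).val : ℚ_[p]) ((v 2 / v 0).val : ℚ_[p]))⁻¹ * y).1 2 j ∈ _
      rw [e3]; exact h _ _

lemma mem_S {y : GL (Fin 3) ℚ_[p]} :
    y ∈ padicDoubleCoset p 1 0 0 ↔ IntM p y.1 ∧ ‖y.1.det‖ = (p : ℝ)⁻¹ := by
  refine ⟨S_int, fun h => ?_⟩
  obtain ⟨i, hi⟩ := exists_rep h.1 h.2
  have := S_right hi (rep_S i)
  rwa [mul_inv_cancel_left] at this

lemma sub_val {s t : ZMod p} (h : ((s.val : ℚ_[p]) - t.val) / p ∈ PadicInt.subring p) : s = t := by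
  have := of_divO (x := (s.val : ℤ_[p]) - (t.val : ℤ_[p])) (by
    simpa only [PadicInt.coe_sub, PadicInt.coe_natCast] using h)
  rw [map_sub, toZMod_val, toZMod_val] at this
  exact sub_eq_zero.1 this

lemma coe_rA (s t : ℚ_[p]) : (rA s t).1 = !![(p : ℚ_[p]), -s, -t; 0, 1, 0; 0, 0, 1] := by
  rw [rA, Units.val_mul, coe_diag']
  ext i j
  fin_cases i <;> fin_cases j <;> simp [uni, Matrix.mul_apply, Fin.sum_univ_three]

lemma coe_rB (t : ℚ_[p]) : (rB t).1 = !![1, 0, 0; 0, (p : ℚ_[p]), -t; 0, 0, 1] := by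
  rw [rB, Units.val_mul, coe_diag']
  ext i j
  fin_cases i <;> fin_cases j <;> simp [uni, Matrix.mul_apply, Fin.sum_univ_three]

lemma coe_rC : (rC (p := p)).1 = !![1, 0, 0; 0, 1, 0; 0, 0, (p : ℚ_[p])] := by
  rw [rC, coe_diag']
  simp

lemma AB (s t u : ℚ_[p]) : ¬ IntM p ((rA s t)⁻¹ * rB u).1 := by
  intro h
  have := h 0 0
  rw [(rA_inv s t _ 0).1, coe_rB] at this
  simp at this
  exact absurd this (Fact.out : p.Prime).one_lt.not_ge

lemma AC (s t : ℚ_[p]) : ¬ IntM p ((rA s t)⁻¹ * rC).1 := by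
  intro h
  have := h 0 0
  rw [(rA_inv s t _ 0).1, coe_rC] at this
  simp at this
  exact absurd this (Fact.out : p.Prime).one_lt.not_ge

lemma BC (t : ℚ_[p]) : ¬ IntM p ((rB t)⁻¹ * rC).1 := by
  intro h
  have := h 1 1
  rw [(rB_inv t _ 1).1, coe_rC] at this
  simp at this
  exact absurd this (Fact.out : p.Prime).one_lt.not_ge

lemma rep_inj {i j : Idx p} (h : (rep i)⁻¹ * rep j ∈ KK p) : i = j := by
  have h' : (rep j)⁻¹ * rep i ∈ KK p := by
    have := (KK p).inv_mem h
    rwa [mul_inv_rev, inv_inv] at this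
  replace h := (mem_KK.1 h).1
  replace h' := (mem_KK.1 h').1
  rcases i with ⟨s, t⟩ | t | _ <;> rcases j with ⟨s', t'⟩ | t' | _
  · have h1 := h 0 1
    have h2 := h 0 2
    simp only [rep] at h1 h2
    rw [(rA_inv _ _ _ _).1, coe_rA] at h1 h2
    have e1 := sub_val (s := s) (t := s') (by
      convert h1 using 1; simp; ring)
    have e2 := sub_val (s := t) (t := t') (by
      convert h2 using 1; simp; ring)
    rw [e1, e2]
  · exact (AB _ _ _ h).elim
  · exact (AC _ _ h).elim
  · exact (AB _ _ _ h').elim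
  · have h2 := h 1 2
    simp only [rep] at h2
    rw [(rB_inv _ _ _).1, coe_rB] at h2
    have e2 := sub_val (s := t) (t := t') (by
      convert h2 using 1; simp; ring)
    rw [e2]
  · exact (BC _ h).elim
  · exact (AC _ _ h').elim
  · exact (BC _ h').elim
  · rfl

/-- Uniqueness: if `X` is not in `K`, the intersection is a single coset. -/
lemma uniq_core {X y : GL (Fin 3) ℚ_[p]} (hy : IntM p y.1) (hyd : ‖y.1.det‖ = (p : ℝ)⁻¹)
    (h1 : IntM p (X * padicDiag p 1 0 0).1) (h2 : IntM p (X * y).1) (hX : ‖X.1.det‖ = 1) :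
    (padicDiag p 1 0 0)⁻¹ * y ∈ KK p ∨ X ∈ KK p := by
  have c1 : ∀ i, X.1 i 1 ∈ PadicInt.subring p := fun i => by
    have := h1 i 1
    rw [Units.val_mul, coe_diag'] at this
    simpa [Matrix.mul_apply, Fin.sum_univ_three] using this
  have c2 : ∀ i, X.1 i 2 ∈ PadicInt.subring p := fun i => by
    have := h1 i 2
    rw [Units.val_mul, coe_diag'] at this
    simpa [Matrix.mul_apply, Fin.sum_univ_three] using this
  by_cases hj : ∀ j, y.1 0 j / p ∈ PadicInt.subring p
  · left
    rw [mem_KK]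
    refine ⟨?_, det_quot (S_int (diag_mem 1 0 0)).2 hyd⟩
    intro i j
    rw [inv_diag, Units.val_mul, coe_diag']
    fin_cases i
    · have := hj j
      simpa [Matrix.mul_apply, Fin.sum_univ_three, div_eq_inv_mul] using this
    · have := hy 1 j
      simpa [Matrix.mul_apply, Fin.sum_univ_three] using this
    · have := hy 2 j
      simpa [Matrix.mul_apply, Fin.sum_univ_three] using this
  · right
    push Not at hj
    obtain ⟨j, hj⟩ := hj
    obtain ⟨hi, hne⟩ := (unit_or ⟨y.1 0 j, hy 0 j⟩).resolve_left hj
    change (y.1 0 j)⁻¹ ∈ _ at hi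
    change y.1 0 j ≠ 0 at hne
    rw [mem_KK]
    refine ⟨fun i k => ?_, hX⟩
    fin_cases k
    · have h3 := h2 i j
      rw [Units.val_mul, Matrix.mul_apply, Fin.sum_univ_three] at h3
      have h4 := Subring.mul_mem _ (Subring.sub_mem _ (Subring.sub_mem _ h3
        (Subring.mul_mem _ (c1 i) (hy 1 j))) (Subring.mul_mem _ (c2 i) (hy 2 j))) hi
      convert h4 using 1
      simp only [Fin.zero_eta]
      field_simp
      ring
    · exact c1 i
    · exact c2 i

lemma uniq {x y z : GL (Fin 3) ℚ_[p]} (hx : x ∉ KK p)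
    (hy : y ∈ padicDoubleCoset p 1 0 0) (hxy : x⁻¹ * y ∈ padicDoubleCoset p 1 0 0)
    (hz : z ∈ padicDoubleCoset p 1 0 0) (hxz : x⁻¹ * z ∈ padicDoubleCoset p 1 0 0) :
    y⁻¹ * z ∈ KK p := by
  have hy' := hy
  obtain ⟨k, hk, l, hl, rfl⟩ := hy
  have hz' := mem_S.1 (S_left ((KK p).inv_mem hk) hz)
  have hxd : ‖(x⁻¹).1.det‖ = 1 := by
    have e1 := (S_int hz).2
    have e2 := (S_int hxz).2
    have hp : (p : ℝ)⁻¹ ≠ 0 := inv_ne_zero (by exact_mod_cast (Fact.out : p.Prime).ne_zero)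
    rw [det_mul_norm, e1] at e2
    exact mul_right_cancel₀ hp (by rw [e2, one_mul])
  have hkk := mem_KK.1 hk
  have g1 : IntM p (x⁻¹ * k * padicDiag p 1 0 0).1 := by
    have := (S_int (S_right ((KK p).inv_mem hl) hxy)).1
    convert this using 2
    group
  have g2 : IntM p (x⁻¹ * k * (k⁻¹ * z)).1 := by
    convert (S_int hxz).1 using 2
    group
  have g3 : ‖(x⁻¹ * k).1.det‖ = 1 := by
    rw [det_mul_norm, hxd, hkk.2, one_mul]
  rcases uniq_core (X := x⁻¹ * k) (y := k⁻¹ * z) hz'.1 hz'.2 g1 g2 g3 with h | h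
  · have := (KK p).mul_mem ((KK p).inv_mem hl) h
    convert this using 1
    group
  · exfalso; apply hx
    have := (KK p).mul_mem hk ((KK p).inv_mem h)
    convert this using 1
    group

lemma d_not_K : padicDiag p 1 0 (-1) ∉ KK p := by
  intro h
  have := (mem_KK.1 h).1 2 2
  rw [coe_diag'] at this
  simp at this
  exact absurd this (Fact.out : p.Prime).one_lt.not_ge

lemma not_K_of {x : GL (Fin 3) ℚ_[p]} (hx : x ∈ padicDoubleCoset p 1 0 (-1)) : x ∉ KK p := by
  obtain ⟨k, hk, l, hl, rfl⟩ := hx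
  intro h
  apply d_not_K (p := p)
  have := (KK p).mul_mem ((KK p).mul_mem ((KK p).inv_mem hk) h) ((KK p).inv_mem hl)
  convert this using 1
  group

lemma exists_of {x : GL (Fin 3) ℚ_[p]} (hx : x ∈ padicDoubleCoset p 1 0 (-1)) :
    ∃ y, y ∈ padicDoubleCoset p 1 0 0 ∧ x⁻¹ * y ∈ padicDoubleCoset p 1 0 0 := by
  obtain ⟨k, hk, l, hl, rfl⟩ := hx
  refine ⟨k * padicDiag p 1 0 0, S_left hk (diag_mem _ _ _), ?_⟩
  have h : (k * padicDiag p 1 0 (-1) * l)⁻¹ * (k * padicDiag p 1 0 0) = l⁻¹ * rC := by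
    have : (padicDiag p 1 0 (-1))⁻¹ * padicDiag p 1 0 0 = rC := by
      apply Units.ext
      rw [inv_diag, Units.val_mul, coe_diag', coe_diag', coe_rC]
      ext i j
      fin_cases i <;> fin_cases j <;>
        simp [Matrix.mul_apply, Fin.sum_univ_three, p_ne]
    rw [← this]; group
  rw [h]
  exact S_left ((KK p).inv_mem hl) rC_S

/-- Core of the Cartan computation. -/
lemma cartan_core {k : GL (Fin 3) ℚ_[p]} (hk : k ∈ KK p) (hi : (k.1 2 0)⁻¹ ∈ PadicInt.subring p)
    (h0 : k.1 2 0 ≠ 0) :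
    padicDiag p 1 0 0 * k * (padicDiag p 1 0 0)⁻¹ ∈ padicDoubleCoset p 1 0 (-1) := by
  obtain ⟨hK, hKd⟩ := mem_KK.1 hk
  have hL : uni (p := p) 0 (p * k.1 0 0 * (k.1 2 0)⁻¹) (k.1 1 0 * (k.1 2 0)⁻¹) ∈ KK p :=
    uni_mem (Subring.zero_mem _) (Subring.mul_mem _ (Subring.mul_mem _ pO (hK _ _)) hi)
      (Subring.mul_mem _ (hK _ _) hi)
  set L := uni (p := p) 0 (p * k.1 0 0 * (k.1 2 0)⁻¹) (k.1 1 0 * (k.1 2 0)⁻¹) with hLdef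
  refine ⟨L, hL, (padicDiag p 1 0 (-1))⁻¹ * L⁻¹ * (padicDiag p 1 0 0 * k * (padicDiag p 1 0 0)⁻¹),
    ?_, by group⟩
  rw [mem_KK_iff, mem_KK]
  constructor
  · have e : ((padicDiag p 1 0 (-1))⁻¹ * L⁻¹ *
        (padicDiag p 1 0 0 * k * (padicDiag p 1 0 0)⁻¹)).1 =
        !![0, k.1 0 1 - k.1 0 0 * (k.1 2 0)⁻¹ * k.1 2 1, k.1 0 2 - k.1 0 0 * (k.1 2 0)⁻¹ * k.1 2 2;
          0, k.1 1 1 - k.1 1 0 * (k.1 2 0)⁻¹ * k.1 2 1, k.1 1 2 - k.1 1 0 * (k.1 2 0)⁻¹ * k.1 2 2;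
          k.1 2 0, p * k.1 2 1, p * k.1 2 2] := by
      have hLi : (L⁻¹).1 = !![1, 0, - (p * k.1 0 0 * (k.1 2 0)⁻¹);
          0, 1, -(k.1 1 0 * (k.1 2 0)⁻¹); 0, 0, 1] := by
        rw [hLdef]
        change (!![1, _, _; 0, 1, _; 0, 0, 1] : Matrix (Fin 3) (Fin 3) ℚ_[p]) = _
        ext i j
        fin_cases i <;> fin_cases j <;> simp
      have hp := p_ne (p := p)
      rw [inv_diag, inv_diag, Units.val_mul, Units.val_mul, Units.val_mul, Units.val_mul, hLi,
        coe_diag', coe_diag', coe_diag']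
      ext i j
      fin_cases i <;> fin_cases j <;>
        simp only [Matrix.mul_apply, Fin.sum_univ_three] <;> simp <;> field_simp <;> ring
    rw [e]
    intro i j
    fin_cases i <;> fin_cases j
    · exact Subring.zero_mem _
    · exact Subring.sub_mem _ (hK _ _) (Subring.mul_mem _ (Subring.mul_mem _ (hK _ _) hi) (hK _ _))
    · exact Subring.sub_mem _ (hK _ _) (Subring.mul_mem _ (Subring.mul_mem _ (hK _ _) hi) (hK _ _))
    · exact Subring.zero_mem _
    · exact Subring.sub_mem _ (hK _ _) (Subring.mul_mem _ (Subring.mul_mem _ (hK _ _) hi) (hK _ _))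
    · exact Subring.sub_mem _ (hK _ _) (Subring.mul_mem _ (Subring.mul_mem _ (hK _ _) hi) (hK _ _))
    · exact hK _ _
    · exact Subring.mul_mem _ pO (hK _ _)
    · exact Subring.mul_mem _ pO (hK _ _)
  · have hp : (p : ℝ) ≠ 0 := by exact_mod_cast (Fact.out : p.Prime).ne_zero
    rw [inv_diag, inv_diag]
    simp only [det_mul_norm, det_diag_norm, det_inv_norm, hKd, (mem_KK.1 hL).2]
    simp [hp]

lemma cartan {k : GL (Fin 3) ℚ_[p]} (hk : k ∈ KK p) :
    padicDiag p 1 0 0 * k * (padicDiag p 1 0 0)⁻¹ ∈ KK p ∨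
    padicDiag p 1 0 0 * k * (padicDiag p 1 0 0)⁻¹ ∈ padicDoubleCoset p 1 0 (-1) := by
  obtain ⟨hK, hKd⟩ := mem_KK.1 hk
  rcases unit_or ⟨k.1 2 0, hK 2 0⟩ with h2 | ⟨h2, h2'⟩
  · rcases unit_or ⟨k.1 1 0, hK 1 0⟩ with h1 | ⟨h1, h1'⟩
    · left
      rw [mem_KK]
      constructor
      · change k.1 1 0 / p ∈ _ at h1
        change k.1 2 0 / p ∈ _ at h2
        have e : (padicDiag p 1 0 0 * k * (padicDiag p 1 0 0)⁻¹).1 =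
          !![k.1 0 0, p * k.1 0 1, p * k.1 0 2; k.1 1 0 / p, k.1 1 1, k.1 1 2;
            k.1 2 0 / p, k.1 2 1, k.1 2 2] := by
          have hp := p_ne (p := p)
          rw [inv_diag, Units.val_mul, Units.val_mul, coe_diag', coe_diag']
          ext i j
          fin_cases i <;> fin_cases j <;>
            simp only [Matrix.mul_apply, Fin.sum_univ_three] <;> simp <;> field_simp
        rw [e]
        intro i j
        fin_cases i <;> fin_cases j <;>
          first
          | exact h1
          | exact h2
          | exact hK _ _
          | exact Subring.mul_mem _ pO (hK _ _)
      · rw [det_mul_norm, det_mul_norm, det_inv_norm, hKd, mul_one]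
        apply mul_inv_cancel₀
        rw [(S_int (diag_mem 1 0 0)).2]
        exact inv_ne_zero (by exact_mod_cast (Fact.out : p.Prime).ne_zero)
    · right
      change (k.1 1 0)⁻¹ ∈ _ at h1
      change k.1 1 0 ≠ 0 at h1'
      have e : (sw12 * k).1 2 0 = k.1 1 0 := by
        rw [Units.val_mul]
        simp [sw12, Matrix.mul_apply, Fin.sum_univ_three]
      have := cartan_core ((KK p).mul_mem sw12_mem hk) (by rw [e]; exact h1) (by rw [e]; exact h1')
      have h3 := S_left ((KK p).inv_mem sw12_mem) this
      have hc : padicDiag p 1 0 0 * sw12 = sw12 * padicDiag p 1 0 0 := by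
        apply Units.ext
        rw [Units.val_mul, Units.val_mul, coe_diag']
        ext i j
        fin_cases i <;> fin_cases j <;> simp [sw12, Matrix.mul_apply, Fin.sum_univ_three]
      convert h3 using 1
      rw [← mul_assoc (padicDiag p 1 0 0) sw12 k, hc]
      group
  · right
    exact cartan_core hk h2 h2'

lemma cartan_of {x y : GL (Fin 3) ℚ_[p]} (hx : x ∉ KK p)
    (hy : y ∈ padicDoubleCoset p 1 0 0) (hxy : x⁻¹ * y ∈ padicDoubleCoset p 1 0 0) :
    x ∈ padicDoubleCoset p 1 0 (-1) := by
  obtain ⟨k, hk, l, hl, rfl⟩ := hy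
  obtain ⟨m, hm, n, hn, h⟩ := hxy
  have hxe : x = k * (padicDiag p 1 0 0 * (l * n⁻¹) * (padicDiag p 1 0 0)⁻¹) * m⁻¹ := by
    have : x = (k * padicDiag p 1 0 0 * l) * (m * padicDiag p 1 0 0 * n)⁻¹ := by
      rw [← h]; group
    rw [this]; group
  rcases cartan ((KK p).mul_mem hl ((KK p).inv_mem hn)) with h' | h'
  · exfalso; apply hx
    rw [hxe]
    exact (KK p).mul_mem ((KK p).mul_mem hk h') ((KK p).inv_mem hm)
  · rw [hxe]
    exact S_right ((KK p).inv_mem hm) (S_left hk h')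

instance : BorelSpace (GL (Fin 3) ℚ_[p]) := ⟨rfl⟩

lemma K_closed : IsClosed (padicK p) := by
  have : padicK p = (⋂ i, ⋂ j, {x : GL (Fin 3) ℚ_[p] | ‖x.1 i j‖ ≤ 1}) ∩
      {x : GL (Fin 3) ℚ_[p] | ‖x.1.det‖ = 1} := by
    ext x
    rw [mem_KK_iff, mem_KK]
    simp [IntM, memO]
  rw [this]
  have hv : Continuous fun x : GL (Fin 3) ℚ_[p] => x.1 := Units.continuous_val
  refine IsClosed.inter (isClosed_iInter fun i => isClosed_iInter fun j => ?_) ?_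
  · exact isClosed_le (hv.matrix_elem i j).norm continuous_const
  · exact isClosed_eq hv.matrix_det.norm continuous_const

lemma coset_meas (y : GL (Fin 3) ℚ_[p]) : MeasurableSet ((fun z => y⁻¹ * z) ⁻¹' padicK p) :=
  (K_closed.preimage (continuous_const.mul continuous_id)).measurableSet

lemma coset_measure (μ : Measure (GL (Fin 3) ℚ_[p])) [μ.IsHaarMeasure]
    (hμ : μ (padicK p) = 1) (y : GL (Fin 3) ℚ_[p]) :
    μ ((fun z => y⁻¹ * z) ⁻¹' padicK p) = 1 := by
  rw [measure_preimage_mul, hμ]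

lemma S_eq : padicDoubleCoset p 1 0 0 = ⋃ i : Idx p, (fun z => (rep i)⁻¹ * z) ⁻¹' padicK p := by
  ext y
  rw [Set.mem_iUnion]
  constructor
  · intro h
    exact exists_rep (S_int h).1 (S_int h).2
  · rintro ⟨i, hi⟩
    have := S_right hi (rep_S i)
    rwa [mul_inv_cancel_left] at this

lemma S_meas : MeasurableSet (padicDoubleCoset p 1 0 0) := by
  rw [S_eq]
  exact MeasurableSet.iUnion fun i => coset_meas _

lemma S_measure (μ : Measure (GL (Fin 3) ℚ_[p])) [μ.IsHaarMeasure]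
    (hμ : μ (padicK p) = 1) : μ.real (padicDoubleCoset p 1 0 0) = (p : ℝ) ^ 2 + p + 1 := by
  rw [S_eq, Measure.real, measure_iUnion ?_ fun i => coset_meas _]
  · simp only [coset_measure μ hμ]
    rw [tsum_fintype]
    simp only [Finset.sum_const, nsmul_eq_mul, mul_one, ENNReal.toReal_natCast, Finset.card_univ,
      Fintype.card_sum, Fintype.card_prod, ZMod.card, Fintype.card_unit]
    push_cast
    ring
  · intro i j hij
    rw [Function.onFun, Set.disjoint_left]
    intro z hi hj
    apply hij
    apply rep_inj
    have hi' : (rep i)⁻¹ * z ∈ KK p := hi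
    have hj' : (rep j)⁻¹ * z ∈ KK p := hj
    have := (KK p).mul_mem hi' ((KK p).inv_mem hj')
    convert this using 1
    group

lemma conv_eq (μ : Measure (GL (Fin 3) ℚ_[p])) (x : GL (Fin 3) ℚ_[p]) :
    padicConv p μ (padicPhi p 1 0 0) (padicPhi p (-1) 0 0) x =
      μ.real (padicDoubleCoset p 1 0 0 ∩ (fun z => x⁻¹ * z) ⁻¹' padicDoubleCoset p 1 0 0) := by
  have hm : MeasurableSet
      (padicDoubleCoset p 1 0 0 ∩ (fun z => x⁻¹ * z) ⁻¹' padicDoubleCoset p 1 0 0) :=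
    S_meas.inter ((continuous_const.mul continuous_id).measurable S_meas)
  rw [← integral_indicator_one hm]
  unfold padicConv
  congr 1
  ext y
  have h : y⁻¹ * x ∈ padicDoubleCoset p (-1) 0 0 ↔ x⁻¹ * y ∈ padicDoubleCoset p 1 0 0 := by
    have := S_inv (p := p) (a := 1) (b := 0) (c := 0) (y := x⁻¹ * y)
    rwa [mul_inv_rev, inv_inv, neg_zero] at this
  classical
  simp only [padicPhi, Set.indicator_apply, h, Set.mem_inter_iff, Set.mem_preimage, Pi.one_apply]
  by_cases h1 : y ∈ padicDoubleCoset p 1 0 0 <;>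
    by_cases h2 : x⁻¹ * y ∈ padicDoubleCoset p 1 0 0 <;> simp [h1, h2]

variable (p)

/-- `Φ_p(1,0,0) * Φ_p(−1,0,0) = (p² + p + 1) Φ_p(0,0,0) + Φ_p(1,0,−1)`. -/
theorem statement2 (μ : Measure (GL (Fin 3) ℚ_[p])) [μ.IsHaarMeasure]
    (hμ : μ (padicK p) = 1) :
    ∀ x, padicConv p μ (padicPhi p 1 0 0) (padicPhi p (-1) 0 0) x =
      ((p : ℝ) ^ 2 + p + 1) * padicPhi p 0 0 0 x + padicPhi p 1 0 (-1) x := by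
  intro x
  rw [conv_eq]
  by_cases hx : x ∈ KK p
  · have h1 : padicPhi p 0 0 0 x = 1 := Set.indicator_of_mem ((S_zero x).2 hx) _
    have h2 : padicPhi p 1 0 (-1) x = 0 :=
      Set.indicator_of_notMem (fun h => not_K_of h hx) _
    have h3 : padicDoubleCoset p 1 0 0 ∩ (fun z => x⁻¹ * z) ⁻¹' padicDoubleCoset p 1 0 0 =
        padicDoubleCoset p 1 0 0 :=
      Set.inter_eq_left.2 fun y hy => S_left ((KK p).inv_mem hx) hy
    rw [h1, h2, h3, S_measure μ hμ]
    ring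
  · have h1 : padicPhi p 0 0 0 x = 0 :=
      Set.indicator_of_notMem (fun h => hx ((S_zero x).1 h)) _
    rw [h1]
    by_cases hd : x ∈ padicDoubleCoset p 1 0 (-1)
    · have h2 : padicPhi p 1 0 (-1) x = 1 := Set.indicator_of_mem hd _
      obtain ⟨y, hy, hxy⟩ := exists_of hd
      have h3 : padicDoubleCoset p 1 0 0 ∩ (fun z => x⁻¹ * z) ⁻¹' padicDoubleCoset p 1 0 0 =
          (fun z => y⁻¹ * z) ⁻¹' padicK p := by
        ext z
        constructor
        · rintro ⟨hz, hxz⟩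
          exact uniq hx hy hxy hz hxz
        · intro hz
          have hz' : y⁻¹ * z ∈ KK p := hz
          constructor
          · have := S_right hz' hy
            rwa [mul_inv_cancel_left] at this
          · have := S_right hz' hxy
            rwa [mul_assoc, mul_inv_cancel_left] at this
      rw [h2, h3, Measure.real, coset_measure μ hμ]
      simp
    · have h2 : padicPhi p 1 0 (-1) x = 0 := Set.indicator_of_notMem hd _
      have h3 : padicDoubleCoset p 1 0 0 ∩ (fun z => x⁻¹ * z) ⁻¹' padicDoubleCoset p 1 0 0 = ∅ := by
        ext z
        simp only [Set.mem_inter_iff, Set.mem_preimage, Set.mem_empty_iff_false, iff_false]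
        rintro ⟨hz, hxz⟩
        exact hd (cartan_of hx hz hxz)
      rw [h2, h3]
      simp

end
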